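/- arXiv:2206.13879 — 8 statements merged into one kernel-verified Lean document; each statement's English description precedes it below -/
import Mathlib

section
/- For all real μ with 0 ≤ μ ≤ 1, all real λ ≥ 0 and all real t ≥ 0, one has (1 + λ)^(−μ) · (1 − exp(−t·λ)) ≤ t^μ. -/
/-- Scalar spectral content of the semigroup Hölder estimate
`‖(I+A)^{−μ}(I − E(t))v‖ ≲ t^μ‖v‖` (Lemma 3.4, estimate (3.21)). -/
theorem scalar_semigroup_holder (μ : ℝ) (hμ0 : 0 ≤ μ) (hμ1 : μ ≤ 1)
    (lam t : ℝ) (hlam : 0 ≤ lam) (ht : 0 ≤ t) :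
    (1 + lam) ^ (-μ) * (1 - Real.exp (-(t * lam))) ≤ t ^ μ := by
  have hx : 0 ≤ t * lam := mul_nonneg ht hlam
  have h0 : 0 ≤ 1 - Real.exp (-(t * lam)) := by
    have : Real.exp (-(t * lam)) ≤ 1 := Real.exp_le_one_iff.mpr (by linarith)
    linarith
  have h1 : 1 - Real.exp (-(t * lam)) ≤ 1 := by
    have := Real.exp_pos (-(t * lam))
    linarith
  have h2 : 1 - Real.exp (-(t * lam)) ≤ t * (1 + lam) := by
    have := Real.add_one_le_exp (-(t * lam))
    nlinarith
  have hp : 0 < 1 + lam := by linarith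
  have h3 : 1 - Real.exp (-(t * lam)) ≤ t ^ μ * (1 + lam) ^ μ := by
    rw [← Real.mul_rpow ht hp.le]
    exact (Real.self_le_rpow_of_le_one h0 h1 hμ1).trans (Real.rpow_le_rpow h0 h2 hμ0)
  rw [Real.rpow_neg hp.le, inv_mul_le_iff₀ (Real.rpow_pos_of_pos hp μ)]
  linarith
end

section
/- For every real ρ with 0 ≤ ρ ≤ 1 and every T > 0 there exists a constant C > 0, depending only on ρ and T, such that for all real λ ≥ 0 and all 0 ≤ t₁ ≤ t₂ ≤ T one has ∫_{t₁}^{t₂} (1 + λ)^ρ · exp(−2λ(t₂ − s)) ds ≤ C · (t₂ − t₁)^(1−ρ). -/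
/-- Scalar spectral content of the integrated semigroup smoothing estimate
`∫_{t₁}^{t₂}‖(I+A)^{ρ/2} E(t₂−s)v‖² ds ≲ (t₂−t₁)^{1−ρ}‖v‖²` (Lemma 3.4, estimate (3.22)). -/
theorem scalar_integrated_semigroup_smoothing (ρ T : ℝ) (hρ0 : 0 ≤ ρ) (hρ1 : ρ ≤ 1) (hT : 0 < T) :
    ∃ C : ℝ, 0 < C ∧ ∀ lam t₁ t₂ : ℝ, 0 ≤ lam → 0 ≤ t₁ → t₁ ≤ t₂ → t₂ ≤ T →
      (∫ s in t₁..t₂, (1 + lam) ^ ρ * Real.exp (-(2 * lam * (t₂ - s))))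
        ≤ C * (t₂ - t₁) ^ (1 - ρ) := by
  refine ⟨(T + 1) ^ ρ, by positivity, ?_⟩
  intro lam t₁ t₂ hl h1 h12 h2
  rw [intervalIntegral.integral_const_mul]
  have hcont : Continuous (fun s : ℝ => Real.exp (-(2 * lam * (t₂ - s)))) := by fun_prop
  have hJ0 : 0 ≤ ∫ s in t₁..t₂, Real.exp (-(2 * lam * (t₂ - s))) :=
    intervalIntegral.integral_nonneg h12 (fun s _ => (Real.exp_pos _).le)
  have hJτ : ∫ s in t₁..t₂, Real.exp (-(2 * lam * (t₂ - s))) ≤ t₂ - t₁ := by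
    have h := intervalIntegral.integral_mono_on (μ := MeasureTheory.volume) h12
      (hcont.intervalIntegrable t₁ t₂)
      ((continuous_const (y := (1 : ℝ))).intervalIntegrable t₁ t₂) (fun s hs => by
        have : 0 ≤ lam * (t₂ - s) := mul_nonneg hl (by linarith [hs.2])
        exact Real.exp_le_one_iff.mpr (by linarith))
    simpa using h
  have hJl : 2 * lam * ∫ s in t₁..t₂, Real.exp (-(2 * lam * (t₂ - s))) ≤ 1 := by
    rw [← intervalIntegral.integral_const_mul]
    have h := intervalIntegral.integral_eq_sub_of_hasDerivAt
      (f := fun s : ℝ => Real.exp (-(2 * lam * (t₂ - s))))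
      (f' := fun s : ℝ => 2 * lam * Real.exp (-(2 * lam * (t₂ - s)))) (a := t₁) (b := t₂)
      (fun s _ => by
        have h := ((((hasDerivAt_id s).const_sub t₂).const_mul (2 * lam)).neg).exp
        refine h.congr_deriv ?_
        simp only [Pi.neg_apply, id]
        ring)
      ((continuous_const.mul hcont).intervalIntegrable t₁ t₂)
    rw [h]
    have := Real.exp_pos (-(2 * lam * (t₂ - t₁)))
    simp only [sub_self, mul_zero, neg_zero, Real.exp_zero]
    linarith
  generalize (∫ s in t₁..t₂, Real.exp (-(2 * lam * (t₂ - s)))) = J at *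
  have hJ : J = J ^ ρ * J ^ (1 - ρ) := by
    rw [← Real.rpow_add' hJ0 (by norm_num)]
    simp
  calc (1 + lam) ^ ρ * J = ((1 + lam) * J) ^ ρ * J ^ (1 - ρ) := by
        rw [Real.mul_rpow (by linarith) hJ0, mul_assoc, ← hJ]
    _ ≤ (T + 1) ^ ρ * (t₂ - t₁) ^ (1 - ρ) := by
        have ha : ((1 + lam) * J) ^ ρ ≤ (T + 1) ^ ρ :=
          Real.rpow_le_rpow (by positivity) (by nlinarith) hρ0
        have hb : J ^ (1 - ρ) ≤ (t₂ - t₁) ^ (1 - ρ) :=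
          Real.rpow_le_rpow hJ0 hJτ (by linarith)
        exact mul_le_mul ha hb (by positivity) (by positivity)
end

section
/- For every real ρ with 0 ≤ ρ ≤ 1 and every T > 0 there exists a constant C > 0, depending only on ρ and T, such that for all real λ ≥ 0 and all 0 ≤ t₁ ≤ t₂ ≤ T one has (1 + λ)^ρ · ∫_{t₁}^{t₂} exp(−λ(t₂ − s)) ds ≤ C · (t₂ − t₁)^(1−ρ). -/
/-- Scalar spectral content of the time-averaged semigroup estimate
`‖(I+A)^ρ ∫_{t₁}^{t₂} E(t₂−s)v ds‖ ≲ (t₂−t₁)^{1−ρ}‖v‖` (Lemma 3.4, estimate (3.23)). -/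
theorem scalar_time_averaged_semigroup (ρ T : ℝ) (hρ0 : 0 ≤ ρ) (hρ1 : ρ ≤ 1) (hT : 0 < T) :
    ∃ C : ℝ, 0 < C ∧ ∀ lam t₁ t₂ : ℝ, 0 ≤ lam → 0 ≤ t₁ → t₁ ≤ t₂ → t₂ ≤ T →
      (1 + lam) ^ ρ * (∫ s in t₁..t₂, Real.exp (-(lam * (t₂ - s))))
        ≤ C * (t₂ - t₁) ^ (1 - ρ) := by
  refine ⟨(1 + T) ^ ρ, by positivity, ?_⟩
  intro lam t₁ t₂ hl h1 h12 h2
  have hcont : Continuous (fun s : ℝ => Real.exp (-(lam * (t₂ - s)))) := by fun_prop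
  have hI0 : 0 ≤ ∫ s in t₁..t₂, Real.exp (-(lam * (t₂ - s))) :=
    intervalIntegral.integral_nonneg h12 (fun s _ => (Real.exp_pos _).le)
  have hIτ : (∫ s in t₁..t₂, Real.exp (-(lam * (t₂ - s)))) ≤ t₂ - t₁ := by
    have := intervalIntegral.integral_mono_on (μ := MeasureTheory.volume) h12
      (hcont.intervalIntegrable t₁ t₂)
      ((continuous_const (y := (1 : ℝ))).intervalIntegrable t₁ t₂) (fun s hs => by
        apply Real.exp_le_one_iff.mpr
        have := mul_nonneg hl (sub_nonneg.mpr hs.2)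
        linarith)
    simpa using this
  have hlI : lam * (∫ s in t₁..t₂, Real.exp (-(lam * (t₂ - s)))) ≤ 1 := by
    rw [← intervalIntegral.integral_const_mul]
    rw [intervalIntegral.integral_eq_sub_of_hasDerivAt
      (f := fun s : ℝ => Real.exp (-(lam * (t₂ - s))))]
    · simp [(Real.exp_pos _).le]
    · intro s _
      have h := ((((hasDerivAt_id s).const_sub t₂).const_mul lam).neg).exp
      have e : lam * Real.exp (-(lam * (t₂ - s)))
          = Real.exp (-(lam * (t₂ - s))) * -(lam * -1) := by ring
      rw [e]
      exact h
    · exact (continuous_const.mul hcont).intervalIntegrable _ _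
  generalize (∫ s in t₁..t₂, Real.exp (-(lam * (t₂ - s)))) = J at *
  have hJ : J = J ^ ρ * J ^ (1 - ρ) := by
    rw [← Real.rpow_add' hI0 (by norm_num)]
    simp
  calc (1 + lam) ^ ρ * J = ((1 + lam) * J) ^ ρ * J ^ (1 - ρ) := by
        rw [Real.mul_rpow (by linarith) hI0, mul_assoc, ← hJ]
    _ ≤ (1 + T) ^ ρ * (t₂ - t₁) ^ (1 - ρ) := by
        apply mul_le_mul
        · exact Real.rpow_le_rpow (by positivity) (by linarith) hρ0
        · exact Real.rpow_le_rpow hI0 hIτ (by linarith)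
        · positivity
        · positivity
end

section
/- Let γ ∈ [0,1] and T > 0. There exists a constant C > 0, depending only on γ and T, with the following property: for every complex Hilbert space H, every bounded linear operator A : H → H that is self-adjoint and positive (⟨A v, v⟩ ≥ 0 for all v ∈ H), every τ > 0, every bounded linear operator B : H → H satisfying B ∘ (1 + τA) = (1 + τA) ∘ B = id, every integer n ≥ 1 with nτ ≤ T, and every v ∈ H, one has ‖(1 + A)^(γ/2) (B^n v)‖ ≤ C · (nτ)^(−γ/2) · ‖v‖. -/
open scoped InnerProductSpace

theorem smoothing_scalar (s T : ℝ) (hs0 : 0 ≤ s) (hs1 : s ≤ 1) (hT : 0 < T) (τ x : ℝ)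
    (hτ : 0 < τ) (hx : 0 ≤ x) (n : ℕ) (hn : 1 ≤ n) (hnT : (n : ℝ) * τ ≤ T) :
    (1 + x) ^ s * ((1 + τ * x)⁻¹) ^ n ≤ (T + 1) * ((n : ℝ) * τ) ^ (-s) := by
  have hn0 : (0 : ℝ) < n := by exact_mod_cast hn
  have ht : 0 < (n : ℝ) * τ := by positivity
  have hp : (0 : ℝ) < (1 + τ * x) ^ n := by positivity
  have hb : 1 + (n : ℝ) * (τ * x) ≤ (1 + τ * x) ^ n :=
    one_add_mul_le_pow (by nlinarith [mul_nonneg hτ.le hx]) n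
  have h1 : (n : ℝ) * τ * (1 + x) ≤ (T + 1) * (1 + τ * x) ^ n := by
    have : 0 ≤ (n : ℝ) * (τ * x) := by positivity
    nlinarith [mul_le_mul_of_nonneg_left hb (by linarith : 0 ≤ T + 1), mul_nonneg hT.le this]
  have h2 : 1 ≤ (T + 1) * (1 + τ * x) ^ n := by
    have : (1 : ℝ) ≤ (1 + τ * x) ^ n := one_le_pow₀ (by nlinarith [mul_nonneg hτ.le hx])
    nlinarith
  have h3 : ((n : ℝ) * τ) ^ s * (1 + x) ^ s ≤ (T + 1) * (1 + τ * x) ^ n := by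
    rw [← Real.mul_rpow ht.le (by linarith)]
    calc ((n : ℝ) * τ * (1 + x)) ^ s ≤ ((T + 1) * (1 + τ * x) ^ n) ^ s :=
          Real.rpow_le_rpow (by positivity) h1 hs0
      _ ≤ ((T + 1) * (1 + τ * x) ^ n) ^ (1 : ℝ) := Real.rpow_le_rpow_of_exponent_le h2 hs1
      _ = _ := Real.rpow_one _
  have hq : 0 < ((n : ℝ) * τ) ^ s := Real.rpow_pos_of_pos ht s
  rw [Real.rpow_neg ht.le, inv_pow, ← div_eq_mul_inv, ← div_eq_mul_inv, div_le_div_iff₀ hp hq]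
  linarith

/-- Operator form of the smoothing estimate for the fully discrete semigroup
`Ē_{h,τ}^n = (I + τA_h)^{−n}`, namely `‖(I+A_h)^{γ/2} Ē_{h,τ}^n v_h‖ ≲ t_n^{−γ/2}‖v_h‖`
with `t_n = nτ` (estimate (4.31)), with constant independent of the operator and of τ. -/
theorem operator_fully_discrete_smoothing (γ T : ℝ) (hγ0 : 0 ≤ γ) (hγ1 : γ ≤ 1) (hT : 0 < T) :
    ∃ C : ℝ, 0 < C ∧
      ∀ (H : Type*) [NormedAddCommGroup H] [InnerProductSpace ℂ H] [CompleteSpace H]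
        (A : H →L[ℂ] H), IsSelfAdjoint A → (∀ v : H, 0 ≤ (⟪A v, v⟫_ℂ).re) →
        ∀ τ : ℝ, 0 < τ → ∀ B : H →L[ℂ] H,
          B * (1 + τ • A) = 1 → (1 + τ • A) * B = 1 →
        ∀ n : ℕ, 1 ≤ n → (n : ℝ) * τ ≤ T → ∀ v : H,
          ‖((1 + A) ^ (γ / 2)) ((B ^ n) v)‖ ≤ C * ((n : ℝ) * τ) ^ (-(γ / 2)) * ‖v‖ := by
  refine ⟨T + 1, by linarith, ?_⟩
  intro H _ _ _ A hA hpos τ hτ B hB1 hB2 n hn hnT v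
  have hA0 : 0 ≤ A := by
    rw [ContinuousLinearMap.nonneg_iff_isPositive]
    exact (ContinuousLinearMap.isPositive_def).2 ⟨hA.isSymmetric, hpos⟩
  have hspec : ∀ x ∈ spectrum ℝ A, 0 ≤ x := fun x hx => spectrum_nonneg_of_nonneg hA0 hx
  have hne : ∀ x ∈ spectrum ℝ A, 1 + τ * x ≠ 0 := fun x hx => by
    have := mul_nonneg hτ.le (hspec x hx)
    linarith
  have hne' : ∀ x ∈ spectrum ℝ A, 1 + x ≠ 0 := fun x hx => by
    have := hspec x hx
    linarith
  have e1 : cfc (fun x : ℝ => 1 + τ * x) A = 1 + τ • A := by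
    rw [cfc_add .., cfc_const_one .., cfc_const_mul .., cfc_id' ..]
  have e2 : cfc (fun x : ℝ => 1 + x) A = 1 + A := by
    rw [cfc_add .., cfc_const_one .., cfc_id' ..]
  have c1 : ContinuousOn (fun x : ℝ => (1 + τ * x)⁻¹) (spectrum ℝ A) :=
    ContinuousOn.inv₀ (by fun_prop) hne
  have eB : B = cfc (fun x : ℝ => (1 + τ * x)⁻¹) A := by
    refine left_inv_eq_right_inv hB1 ?_
    rw [← e1, ← cfc_mul _ _ A (by fun_prop) c1, ← cfc_const_one ℝ A]
    exact cfc_congr fun x hx => mul_inv_cancel₀ (hne x hx)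
  have c2 : ContinuousOn (fun x : ℝ => (1 + x) ^ (γ / 2)) (spectrum ℝ A) :=
    ContinuousOn.rpow_const (by fun_prop) fun x hx => Or.inl (hne' x hx)
  have e3 : (1 + A) ^ (γ / 2) = cfc (fun x : ℝ => (1 + x) ^ (γ / 2)) A := by
    have h1A : 0 ≤ 1 + A := add_nonneg zero_le_one hA0
    rw [CFC.rpow_eq_cfc_real (a := 1 + A), ← e2]
    have hc : ContinuousOn (fun x : ℝ => x ^ (γ / 2)) ((fun x : ℝ => 1 + x) '' spectrum ℝ A) :=
      (Real.continuous_rpow_const (by linarith)).continuousOn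
    exact (cfc_comp' (fun x : ℝ => x ^ (γ / 2)) (fun x : ℝ => 1 + x) A hc (by fun_prop)).symm
  have e4 : (1 + A) ^ (γ / 2) * B ^ n =
      cfc (fun x : ℝ => (1 + x) ^ (γ / 2) * ((1 + τ * x)⁻¹) ^ n) A := by
    rw [e3, eB, ← cfc_pow _ n A c1]
    exact (cfc_mul _ _ A c2 (c1.pow n)).symm
  rw [← ContinuousLinearMap.mul_apply, e4]
  refine ContinuousLinearMap.le_of_opNorm_le _ ?_ v
  refine norm_cfc_le (by positivity) fun x hx => ?_
  have hx0 := hspec x hx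
  rw [Real.norm_of_nonneg (by positivity)]
  exact smoothing_scalar (γ / 2) T (by linarith) (by linarith) hT τ x hτ hx0 n hn hnT
end

section
/- For every γ ∈ [0,1] and every T > 0 there exists a constant C > 0, depending only on γ and T, such that for all real τ > 0, all integers n ≥ 1 with nτ ≤ T, and all real λ ≥ 0, one has (1 + λ)^(γ/2) · (1 + τλ)^(−n) ≤ C · (nτ)^(−γ/2). -/
/-- Scalar inequality (4.34): smoothing for the backward-Euler rational function,
`(1 + λ)^{γ/2} (1 + τλ)^{−n} ≤ C (nτ)^{−γ/2}`. -/
theorem scalar_backward_euler_smoothing (γ T : ℝ) (hγ0 : 0 ≤ γ) (hγ1 : γ ≤ 1) (hT : 0 < T) :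
    ∃ C : ℝ, 0 < C ∧ ∀ τ : ℝ, 0 < τ → ∀ n : ℕ, 1 ≤ n → (n : ℝ) * τ ≤ T →
      ∀ lam : ℝ, 0 ≤ lam →
        (1 + lam) ^ (γ / 2) * ((1 + τ * lam)⁻¹) ^ n ≤ C * ((n : ℝ) * τ) ^ (-(γ / 2)) := by
  refine ⟨1 + T, by linarith, ?_⟩
  intro τ hτ n hn hnT lam hlam
  have hn' : (1 : ℝ) ≤ n := by exact_mod_cast hn
  have hs : 0 < (n : ℝ) * τ := by positivity
  have hτl : 0 ≤ τ * lam := by positivity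
  have hB : 1 + (n : ℝ) * (τ * lam) ≤ (1 + τ * lam) ^ n :=
    one_add_mul_le_pow (by linarith) n
  have hpow : 0 < (1 + τ * lam) ^ n := by positivity
  have key : ((n : ℝ) * τ) ^ (γ / 2) * (1 + lam) ^ (γ / 2) ≤ (1 + T) * (1 + τ * lam) ^ n := by
    rw [← Real.mul_rpow hs.le (by linarith)]
    have hX : 0 ≤ (n : ℝ) * (τ * lam) := by positivity
    calc ((n : ℝ) * τ * (1 + lam)) ^ (γ / 2)
        ≤ (1 + T + (n : ℝ) * (τ * lam)) ^ (γ / 2) :=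
          Real.rpow_le_rpow (by positivity) (by nlinarith) (by linarith)
      _ ≤ (1 + T + (n : ℝ) * (τ * lam)) ^ (1 : ℝ) :=
          Real.rpow_le_rpow_of_exponent_le (by linarith) (by linarith)
      _ = 1 + T + (n : ℝ) * (τ * lam) := Real.rpow_one _
      _ ≤ (1 + T) * (1 + (n : ℝ) * (τ * lam)) := by nlinarith [mul_nonneg hT.le hX]
      _ ≤ (1 + T) * (1 + τ * lam) ^ n := mul_le_mul_of_nonneg_left hB (by linarith)
  have hsp : 0 < ((n : ℝ) * τ) ^ (γ / 2) := Real.rpow_pos_of_pos hs _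
  rw [Real.rpow_neg hs.le, inv_pow, ← div_eq_mul_inv, ← div_eq_mul_inv,
    div_le_div_iff₀ hpow hsp]
  linarith
end

section
/- For every real λ ≥ 0, every real τ > 0 and every natural number n, one has Σ_{j=1}^{n} ∫_{(j−1)τ}^{jτ} (exp(−λ s) − exp(−λ j τ))² ds ≤ τ/2. -/
lemma step_bound (lam τ a b : ℝ) (hlam : 0 ≤ lam) (hτ : 0 < τ) (hab : b = a + τ) :
    ∫ s in a..b, (Real.exp (-(lam * s)) - Real.exp (-(lam * b))) ^ 2
      ≤ τ / 2 * (Real.exp (-(2 * lam * a)) - Real.exp (-(2 * lam * b))) := by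
  have hF : ∫ s in a..b, τ * lam * Real.exp (-(2 * lam * s))
      = -(τ / 2) * Real.exp (-(2 * lam * b)) - -(τ / 2) * Real.exp (-(2 * lam * a)) := by
    apply intervalIntegral.integral_eq_sub_of_hasDerivAt
      (f := fun s => -(τ / 2) * Real.exp (-(2 * lam * s)))
    · intro s _
      have h := ((((hasDerivAt_id s).const_mul (2 * lam)).neg).exp).const_mul (-(τ / 2))
      refine HasDerivAt.congr_deriv (f := fun s => -(τ / 2) * Real.exp (-(2 * lam * s))) h ?_
      simp only [id, Pi.neg_apply]
      ring
    · exact Continuous.intervalIntegrable (by fun_prop) _ _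
  have hle : ∫ s in a..b, (Real.exp (-(lam * s)) - Real.exp (-(lam * b))) ^ 2
      ≤ ∫ s in a..b, τ * lam * Real.exp (-(2 * lam * s)) := by
    apply intervalIntegral.integral_mono_on (by linarith)
    · exact Continuous.intervalIntegrable (by fun_prop) _ _
    · exact Continuous.intervalIntegrable (by fun_prop) _ _
    · rintro s ⟨h1, h2⟩
      have e1 : Real.exp (-(lam * b)) = Real.exp (-(lam * s)) * Real.exp (-(lam * (b - s))) := by
        rw [← Real.exp_add]; ring_nf
      have e2 : Real.exp (-(2 * lam * s)) = Real.exp (-(lam * s)) ^ 2 := by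
        rw [sq, ← Real.exp_add]; ring_nf
      have h3 : 0 ≤ lam * (b - s) := mul_nonneg hlam (by linarith)
      have h4 : lam * (b - s) ≤ lam * τ := mul_le_mul_of_nonneg_left (by linarith) hlam
      have h5 := Real.add_one_le_exp (-(lam * (b - s)))
      have h6 := Real.exp_pos (-(lam * (b - s)))
      have h7 : Real.exp (-(lam * (b - s))) ≤ 1 := Real.exp_le_one_iff.mpr (by linarith)
      rw [e1, e2]
      generalize Real.exp (-(lam * (b - s))) = y at *
      have h8 : (1 - y) ^ 2 ≤ τ * lam := by nlinarith
      have := mul_le_mul_of_nonneg_right h8 (sq_nonneg (Real.exp (-(lam * s))))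
      nlinarith
  rw [hF] at hle
  linarith

/-- Scalar spectral content of estimate (4.40):
`Σ_j ∫_{t_{j−1}}^{t_j} (e^{−λs} − e^{−λ t_j})² ds ≤ τ/2`. -/
theorem scalar_right_endpoint_exponential_sum (lam τ : ℝ) (hlam : 0 ≤ lam) (hτ : 0 < τ)
    (n : ℕ) :
    ∑ j ∈ Finset.Icc 1 n, ∫ s in (((j : ℝ) - 1) * τ)..((j : ℝ) * τ),
        (Real.exp (-(lam * s)) - Real.exp (-(lam * ((j : ℝ) * τ)))) ^ 2 ≤ τ / 2 := by
  have key : ∑ j ∈ Finset.Icc 1 n, ∫ s in (((j : ℝ) - 1) * τ)..((j : ℝ) * τ),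
        (Real.exp (-(lam * s)) - Real.exp (-(lam * ((j : ℝ) * τ)))) ^ 2
        ≤ τ / 2 * (1 - Real.exp (-(2 * lam * ((n : ℝ) * τ)))) := by
    induction n with
    | zero => simp
    | succ k ih =>
      rw [Finset.sum_Icc_succ_top (by omega)]
      have h := step_bound lam τ ((((k + 1 : ℕ) : ℝ) - 1) * τ) (((k + 1 : ℕ) : ℝ) * τ) hlam hτ
        (by ring)
      have e : (((k + 1 : ℕ) : ℝ) - 1) = k := by push_cast; ring
      rw [e] at h ⊢
      linarith
  have := mul_pos hτ (Real.exp_pos (-(2 * lam * ((n : ℝ) * τ))))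
  linarith
end

section
/- There exists a constant C > 0 such that for every integer n ≥ 1 and every real x ≥ 0, one has |exp(−n x) − (1 + x)^(−n)| ≤ C · min(x^(1/2), n^(−1/2)). -/
lemma aux_pow_lower (x : ℝ) (hx : 0 ≤ x) (n : ℕ) :
    2 + 2 * (n : ℝ) * x + n * (n - 1) * x ^ 2 ≤ 2 * (1 + x) ^ n := by
  induction n with
  | zero => simp
  | succ k ih =>
    have h := mul_le_mul_of_nonneg_right ih (by linarith : 0 ≤ 1 + x)
    have hk : 0 ≤ (k : ℝ) * (k - 1) := by
      rcases k with _ | k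
      · simp
      · push_cast
        have : (0 : ℝ) ≤ k := Nat.cast_nonneg k
        have h2 : ((k : ℝ) + 1 - 1) = k := by ring
        rw [h2]; positivity
    have h3 : 0 ≤ (k : ℝ) * (k - 1) * x ^ 3 := mul_nonneg hk (by positivity)
    rw [pow_succ (1 + x) k]
    push_cast
    nlinarith

/-- The bounds `|F_n(x)| ≲ x^{1/2}` and `|F_n(x)| ≲ n^{−1/2}` for
`F_n(x) = e^{−nx} − (1+x)^{−n}` (Lemma 4.8). -/
theorem rational_approx_exp_bound :
    ∃ C : ℝ, 0 < C ∧ ∀ n : ℕ, 1 ≤ n → ∀ x : ℝ, 0 ≤ x →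
      |Real.exp (-((n : ℝ) * x)) - ((1 + x) ^ n)⁻¹|
        ≤ C * min (x ^ ((1:ℝ)/2)) ((n : ℝ) ^ (-(1:ℝ)/2)) := by
  refine ⟨2, by norm_num, fun n hn x hx => ?_⟩
  have hn1 : (1 : ℝ) ≤ n := by exact_mod_cast hn
  have hn0 : (0 : ℝ) < n := by linarith
  have hexp : Real.exp (-((n : ℝ) * x)) = Real.exp (-x) ^ n := by
    rw [← Real.exp_nat_mul]; congr 1; ring
  have hP : 0 < (1 + x) ^ n := by positivity
  have hb : 1 - x ≤ Real.exp (-x) := by have := Real.add_one_le_exp (-x); linarith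
  have hb0 := Real.exp_pos (-x)
  have hr1 : Real.exp (-x) * (1 + x) ≤ 1 := by
    have h := Real.add_one_le_exp x
    calc Real.exp (-x) * (1 + x) ≤ Real.exp (-x) * Real.exp x := by
          apply mul_le_mul_of_nonneg_left _ hb0.le; linarith
      _ = 1 := by rw [← Real.exp_add]; simp
  have hr0 : 0 ≤ Real.exp (-x) * (1 + x) := by positivity
  have hr2 : 1 - x ^ 2 ≤ Real.exp (-x) * (1 + x) := by nlinarith
  have hbern := one_add_mul_le_pow (a := Real.exp (-x) * (1 + x) - 1) (by linarith) n
  have hrn : (Real.exp (-x) * (1 + x)) ^ n ≤ 1 := pow_le_one₀ hr0 hr1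
  rw [add_sub_cancel] at hbern
  have hkey : 1 - n * x ^ 2 ≤ (Real.exp (-x) * (1 + x)) ^ n := by nlinarith
  rw [mul_pow] at hkey hrn
  rw [hexp, abs_sub_comm]
  set B := Real.exp (-x) ^ n with hB
  have hB0 : 0 < B := by positivity
  set P := (1 + x) ^ n with hPdef
  have hlow := aux_pow_lower x hx n
  rw [← hPdef] at hlow
  have hnn : 0 ≤ (n : ℝ) * (n - 1) * x ^ 2 :=
    mul_nonneg (mul_nonneg hn0.le (by linarith)) (by positivity)
  have hnx : 0 ≤ (n : ℝ) * x := by positivity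
  have hPinv : P⁻¹ * P = 1 := inv_mul_cancel₀ hP.ne'
  set D := P⁻¹ - B with hD
  have hDP : D * P = 1 - B * P := by rw [hD, sub_mul, hPinv]
  have hD0 : 0 ≤ D := by
    by_contra h
    push Not at h
    nlinarith [mul_neg_of_neg_of_pos h hP]
  have hD1 : D ≤ 1 := by
    have : P⁻¹ ≤ 1 := inv_le_one_of_one_le₀ (by nlinarith)
    linarith
  have hDx : D ≤ x := by
    refine le_of_mul_le_mul_right ?_ hP
    have : x * (n * x) ≤ x * P := mul_le_mul_of_nonneg_left (by nlinarith) hx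
    nlinarith
  have hDn : D * n ≤ 4 := by
    rcases Nat.lt_or_ge n 2 with h | h
    · have : n = 1 := by omega
      have h' : (n : ℝ) = 1 := by exact_mod_cast this
      rw [h']; linarith
    · have h2 : (2 : ℝ) ≤ n := by exact_mod_cast h
      refine le_of_mul_le_mul_right ?_ hP
      have e1 : (n : ℝ) * (D * P) ≤ n * (n * x ^ 2) :=
        mul_le_mul_of_nonneg_left (by linarith) hn0.le
      have e2 : 0 ≤ (n : ℝ) * (n - 2) * x ^ 2 :=
        mul_nonneg (mul_nonneg hn0.le (by linarith)) (by positivity)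
      nlinarith
  have hDsq : D ^ 2 ≤ D := by nlinarith
  rw [abs_of_nonneg hD0, mul_min_of_nonneg _ _ (by norm_num : (0:ℝ) ≤ 2)]
  apply le_min
  · rw [← Real.sqrt_eq_rpow]
    have : D ≤ √x := Real.le_sqrt_of_sq_le (by linarith)
    linarith [Real.sqrt_nonneg x]
  · rw [neg_div, Real.rpow_neg hn0.le, ← Real.sqrt_eq_rpow, ← div_eq_mul_inv,
      le_div_iff₀ (Real.sqrt_pos.2 hn0)]
    refine (abs_le_of_sq_le_sq' ?_ (by norm_num)).2
    rw [mul_pow, Real.sq_sqrt hn0.le]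
    nlinarith
end

section
/- There exists a constant C > 0 such that for all real λ ≥ 0, all real τ > 0, all natural numbers m, and every function ξ : ℕ → ℝ satisfying (j−1)τ ≤ ξ j ≤ jτ for each 1 ≤ j ≤ m, one has Σ_{j=1}^{m} ∫_{(j−1)τ}^{jτ} (exp(−λ · ξ j) − exp(−λ σ))² dσ ≤ C · τ. -/
/-- Scalar spectral content of the estimate
`Σ_j ∫_{t_{j−1}}^{t_j} (e^{−λξ_j} − e^{−λσ})² dσ ≲ τ` (term J*_{241} in Section 5). -/
theorem scalar_intermediate_point_exponential_sum :
    ∃ C : ℝ, 0 < C ∧ ∀ lam τ : ℝ, 0 ≤ lam → 0 < τ → ∀ (m : ℕ) (ξ : ℕ → ℝ),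
      (∀ j : ℕ, 1 ≤ j → j ≤ m → ((j : ℝ) - 1) * τ ≤ ξ j ∧ ξ j ≤ (j : ℝ) * τ) →
      (∑ j ∈ Finset.Icc 1 m, ∫ σ in (((j : ℝ) - 1) * τ)..((j : ℝ) * τ),
          (Real.exp (-(lam * ξ j)) - Real.exp (-(lam * σ))) ^ 2) ≤ C * τ := by
  refine ⟨1, one_pos, ?_⟩
  intro lam τ hl hτ m ξ h
  have key : ∑ j ∈ Finset.Icc 1 m, (∫ σ in (((j : ℝ) - 1) * τ)..((j : ℝ) * τ),
      (Real.exp (-(lam * ξ j)) - Real.exp (-(lam * σ))) ^ 2)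
      ≤ (1 - Real.exp (-(lam * ((m : ℝ) * τ)))) * τ := by
    induction m with
    | zero => simp
    | succ n ih =>
      have ih' := ih (fun j h1 h2 => h j h1 (by omega))
      rw [Finset.sum_Icc_succ_top (by omega)]
      obtain ⟨hx1, hx2⟩ := h (n + 1) (by omega) le_rfl
      have hc : ((n + 1 : ℕ) : ℝ) - 1 = n := by push_cast; ring
      rw [hc] at hx1 ⊢
      set b : ℝ := ((n + 1 : ℕ) : ℝ) * τ with hb
      set a : ℝ := (n : ℝ) * τ with ha
      have hba : b - a = τ := by rw [hb, ha]; push_cast; ring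
      have ha0 : 0 ≤ a := by positivity
      have hA : Real.exp (-(lam * a)) ≤ 1 := by
        apply Real.exp_le_one_iff.mpr
        have := mul_nonneg hl ha0
        linarith
      have hB := Real.exp_pos (-(lam * b))
      have mono : ∀ x y : ℝ, x ≤ y → Real.exp (-(lam * y)) ≤ Real.exp (-(lam * x)) := by
        intro x y hxy
        apply Real.exp_le_exp.mpr
        have := mul_le_mul_of_nonneg_left hxy hl
        linarith
      have hint : (∫ σ in a..b, (Real.exp (-(lam * ξ (n + 1))) - Real.exp (-(lam * σ))) ^ 2)
          ≤ ∫ _σ in a..b, (Real.exp (-(lam * a)) - Real.exp (-(lam * b))) := by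
        apply intervalIntegral.integral_mono_on (by linarith)
        · apply Continuous.intervalIntegrable
          fun_prop
        · exact intervalIntegrable_const
        · intro σ hσ
          have h1 := mono _ _ hx1
          have h2 := mono _ _ hx2
          have h3 := mono _ _ hσ.1
          have h4 := mono _ _ hσ.2
          have h5 : (Real.exp (-(lam * ξ (n + 1))) - Real.exp (-(lam * σ))) ^ 2
              ≤ (Real.exp (-(lam * a)) - Real.exp (-(lam * b))) ^ 2 :=
            sq_le_sq' (by linarith) (by linarith)
          nlinarith
      rw [intervalIntegral.integral_const, hba, smul_eq_mul] at hint
      linarith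
  have := Real.exp_pos (-(lam * ((m : ℝ) * τ)))
  nlinarith
end
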